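/- Let A_n be a sequence of d_A×d_m real matrices, each of whose rows is either the zero vector or has Euclidean norm 1, and let g_n ∈ ℝ^{d_A} with g_n ≥ 0 componentwise. Then there exist an integer d_B ≥ 0, a subsequence (n_q), d_B×d_m matrices B_q, and vectors h_q ∈ ℝ^{d_B} with h_q ≥ 0, such that: (a) A_{n_q} → A_0 and B_q → B_0 for some matrices A_0, B_0, and g_{n_q} → g_0 and h_q → h_0 componentwise in [0,∞]; (b) poly(A_{n_q},g_{n_q}) ⊆ poly(B_q,h_q) for all q; (c) for all q and all x ∈ poly(A_{n_q},g_{n_q}), the rank of the matrix formed by the rows of A_{n_q} active at x (for the system (A_{n_q},g_{n_q})) equals the rank of the matrix obtained by stacking those rows together with the rows of B_q active at x (for the system (B_q,h_q)); (d) poly([A_{n_q};B_q],[g_{n_q};h_q]) Kuratowski-converges to poly([A_0;B_0],[g_0;h_0]). -/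

import Mathlib

open Filter Topology
open scoped RealInnerProductSpace ENNReal

noncomputable section

/-- The polyhedron `{x : ⟪A j, x⟫ ≤ h j for all j}` with real right-hand sides. -/
def polyR {d m : ℕ} (A : Fin d → EuclideanSpace ℝ (Fin m)) (h : Fin d → ℝ) :
    Set (EuclideanSpace ℝ (Fin m)) :=
  {x | ∀ j, ⟪A j, x⟫ ≤ h j}

/-- The polyhedron with right-hand sides in `[0,∞]`: only the constraints with a finite
right-hand side are imposed. -/
def polyE {d m : ℕ} (A : Fin d → EuclideanSpace ℝ (Fin m)) (h : Fin d → ℝ≥0∞) :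
    Set (EuclideanSpace ℝ (Fin m)) :=
  {x | ∀ j, h j ≠ ⊤ → ⟪A j, x⟫ ≤ (h j).toReal}

/-- Kuratowski convergence of a sequence of subsets of a topological space. -/
def KuratowskiTendsto {E : Type*} [TopologicalSpace E] (S : ℕ → Set E) (S₀ : Set E) : Prop :=
  (∀ x₀ ∈ S₀, ∃ x : ℕ → E, (∀ n, x n ∈ S n) ∧ Tendsto x atTop (nhds x₀)) ∧
    ∀ (φ : ℕ → ℕ), StrictMono φ → ∀ (x : ℕ → E) (x₀ : E),
      (∀ q, x q ∈ S (φ q)) → Tendsto x atTop (nhds x₀) → x₀ ∈ S₀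

end

/-!
The augmenting inequalities come from well-conditioned generating sets of cones. Let `C_n` be the
cone generated by the vectors `(a_j, g_j) ∈ ℝ^m × ℝ`, where `a_j` are the rows of `A_n`. A vector
`(b, h) ∈ C_n` is a valid inequality `⟪b, x⟫ ≤ h` for `poly(A_n, g_n)`, and by complementary
slackness it can be active at a feasible point only if `b` lies in the span of the active rows.
So any choice of rows in `C_n` satisfies (b) and (c), and bounded choices converge along a
subsequence.

For (d), the new rows are generators of `C_n`, boundedly many and of bounded norm, such that
every element of `C_n` is a combination of them with coefficients at most a constant times its
norm, all bounds being uniform in `n` (`exists_wellConditioned_generators`). To obtain them, cut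
the cone along the coordinate orthants. Double description (`fourier_motzkin_step`) bounds the
number of generators of each piece. Within an orthant the `ℓ¹` norm is linear, so for generators
normalized to `ℓ¹` norm one the coefficients of a nonnegative combination sum to its `ℓ¹` norm.

Let now `x` be feasible for the limit system and let `y_n` be its projection onto
`poly(A_n, g_n)`. By Farkas' lemma (`exists_projection_kkt`) `(x - y_n, ⟪x - y_n, y_n⟫) ∈ C_n`, and
it is bounded since `0` is feasible. Expanding it in the new rows `(b_i, h_i)` with bounded
coefficients `μ_i ≥ 0` gives `‖x - y_n‖² = ∑ μ_i (⟪b_i, x⟫ - h_i)`. The limits of the terms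
`⟪b_i, x⟫ - h_i` are nonpositive, so `y_n → x`. The other half of Kuratowski convergence is the
passage to the limit in the inequalities.
-/

/-! ### Generators of polyhedral pieces of a cone -/

theorem mem_hull_range {ι V : Type*} [Fintype ι] [AddCommGroup V] [Module ℝ V]
    {v : ι → V} {x : V} :
    x ∈ PointedCone.hull ℝ (Set.range v) ↔
      ∃ c : ι → ℝ, (∀ i, 0 ≤ c i) ∧ ∑ i, c i • v i = x := by
  unfold PointedCone.hull
  rw [Submodule.mem_span_range_iff_exists_fun]
  constructor
  · rintro ⟨c, hc⟩
    exact ⟨fun i => c i, fun i => (c i).2, hc⟩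
  · rintro ⟨c, h0, hc⟩
    exact ⟨fun i => ⟨c i, h0 i⟩, hc⟩

/-- One step of the double description method: the part of a finitely generated cone in the
half-space `f ≥ 0` is generated by the generators with `f ≥ 0` and by the combinations, lying on
the hyperplane `f = 0`, of a generator with `f > 0` and one with `f < 0`. -/
theorem fourier_motzkin_step {ι V : Type*} [Fintype ι] [AddCommGroup V] [Module ℝ V]
    (f : V →ₗ[ℝ] ℝ) (v : ι → V) :
    ∃ w : ι ⊕ ι × ι → V, ∀ x, x ∈ PointedCone.hull ℝ (Set.range w) ↔
      x ∈ PointedCone.hull ℝ (Set.range v) ∧ 0 ≤ f x := by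
  classical
  -- positive and negative parts of `f` on the generators
  let p : ι → ℝ := fun i => max (f (v i)) 0
  let n : ι → ℝ := fun i => max (-f (v i)) 0
  have hp : ∀ i, 0 ≤ p i := fun i => le_max_right _ _
  have hn : ∀ i, 0 ≤ n i := fun i => le_max_right _ _
  have hpn : ∀ i, f (v i) = p i - n i := fun i => by
    simp only [p, n]; rcases le_total (f (v i)) 0 with h | h <;> simp [h]
  refine ⟨Sum.elim (fun i => if 0 ≤ f (v i) then v i else 0)
    (fun ij => if 0 < f (v ij.1) ∧ f (v ij.2) < 0 then p ij.1 • v ij.2 + n ij.2 • v ij.1 else 0),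
    fun x => ⟨fun hx => ?_, ?_⟩⟩
  · have hv : ∀ i, v i ∈ PointedCone.hull ℝ (Set.range v) := fun i =>
      Submodule.subset_span ⟨i, rfl⟩
    obtain ⟨c, hc, rfl⟩ := mem_hull_range.1 hx
    constructor
    · refine Submodule.sum_mem _ fun i _ => PointedCone.smul_mem _ (hc i) ?_
      rcases i with i | ⟨i, j⟩
      · simp only [Sum.elim_inl]
        split_ifs
        exacts [hv i, zero_mem _]
      · simp only [Sum.elim_inr]
        split_ifs
        exacts [add_mem (PointedCone.smul_mem _ (hp i) (hv j))
          (PointedCone.smul_mem _ (hn j) (hv i)), zero_mem _]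
    · rw [map_sum]
      refine Finset.sum_nonneg fun i _ => ?_
      rw [map_smul, smul_eq_mul]
      refine mul_nonneg (hc i) ?_
      rcases i with i | ⟨i, j⟩
      · simp only [Sum.elim_inl]
        split_ifs with h
        exacts [h, by simp]
      · simp only [Sum.elim_inr]
        split_ifs with h
        · have hni : n i = 0 := max_eq_right (by linarith)
          have hpj : p j = 0 := max_eq_right (by linarith)
          simp only [map_add, map_smul, smul_eq_mul, hpn, hni, hpj]
          linarith
        · simp
  · rintro ⟨hx, hfx⟩
    obtain ⟨c, hc, rfl⟩ := mem_hull_range.1 hx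
    rw [mem_hull_range]
    set S := ∑ i, c i * p i with hS
    set T := ∑ i, c i * n i with hT
    have hTS : T ≤ S := by
      have : f (∑ i, c i • v i) = S - T := by
        simp only [map_sum, map_smul, smul_eq_mul, hpn, mul_sub, Finset.sum_sub_distrib, hS, hT]
      linarith
    have hT0 : 0 ≤ T := Finset.sum_nonneg fun i _ => mul_nonneg (hc i) (hn i)
    rcases hT0.eq_or_lt with hT1 | hT1
    · -- no generator with `f < 0` carries a positive coefficient
      refine ⟨Sum.elim c 0, ?_, ?_⟩
      · rintro (i | i) <;> simp [hc]
      · simp only [Fintype.sum_sum_type, Sum.elim_inl, Sum.elim_inr, Pi.zero_apply, zero_smul,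
          Finset.sum_const_zero, add_zero]
        refine Finset.sum_congr rfl fun i _ => ?_
        split_ifs with h
        · rfl
        · have := (Finset.sum_eq_zero_iff_of_nonneg
            (fun i _ => mul_nonneg (hc i) (hn i))).1 hT1.symm i (Finset.mem_univ i)
          have hni : n i ≠ 0 := by
            have : 0 < n i := lt_max_of_lt_left (by linarith)
            exact this.ne'
          simp [(mul_eq_zero.1 this).resolve_right hni]
    · have hS0 : 0 < S := hT1.trans_le hTS
      -- transport plan: `c i * c j / S` couples the positive generator `i` with the negative `j`
      refine ⟨Sum.elim (fun i => if 0 < f (v i) then (1 - T / S) * c i else c i)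
        (fun ij => if 0 < f (v ij.1) ∧ f (v ij.2) < 0 then c ij.1 * c ij.2 / S else 0), ?_, ?_⟩
      · have : 0 ≤ 1 - T / S := by
          rw [sub_nonneg, div_le_one hS0]; exact hTS
        rintro (i | i)
        · simp only [Sum.elim_inl]
          split_ifs
          exacts [mul_nonneg this (hc i), hc i]
        · simp only [Sum.elim_inr]
          split_ifs
          exacts [div_nonneg (mul_nonneg (hc _) (hc _)) hS0.le, le_rfl]
      · simp only [Fintype.sum_sum_type, Sum.elim_inl, Sum.elim_inr, Fintype.sum_prod_type]
        have key : ∀ i j, (if 0 < f (v i) ∧ f (v j) < 0 then c i * c j / S else 0) •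
            (if 0 < f (v i) ∧ f (v j) < 0 then p i • v j + n j • v i else 0) =
            (c i * p i) • ((if f (v j) < 0 then c j / S else 0) • v j) +
            (c j * n j) • ((if 0 < f (v i) then c i / S else 0) • v i) := by
          intro i j
          by_cases h1 : 0 < f (v i) <;> by_cases h2 : f (v j) < 0
          · simp only [h1, h2, and_self, if_true]; module
          · have : n j = 0 := max_eq_right (by linarith)
            simp [h1, h2, this]
          · have : p i = 0 := max_eq_right (by linarith)
            simp [h1, h2, this]
          · simp [h1, h2]
        simp only [key, Finset.sum_add_distrib]
        simp only [← Finset.smul_sum, ← Finset.sum_smul]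
        rw [Finset.smul_sum, Finset.smul_sum, ← Finset.sum_add_distrib, ← Finset.sum_add_distrib]
        refine Finset.sum_congr rfl fun i _ => ?_
        rw [← hS, ← hT]
        rcases lt_trichotomy (f (v i)) 0 with h | h | h
        · simp only [h, h.not_gt, h.not_ge, if_true, if_false, smul_zero, zero_add, zero_smul,
            add_zero, smul_smul]
          rw [mul_div_cancel₀ _ hS0.ne']
        · simp [h]
        · simp only [h, h.not_gt, h.le, if_true, if_false, smul_zero, zero_add, zero_smul,
            smul_smul, ← add_smul]
          congr 1
          field_simp
          ring

/-- The number of generators needed for a polyhedral cut of a finitely generated cone depends only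
on the number of generators and of cuts. -/
theorem exists_generators_cut {V : Type*} [AddCommGroup V] [Module ℝ V]
    (L : List (V →ₗ[ℝ] ℝ)) (ι : Type) [Fintype ι] :
    ∃ (κ : Type) (_ : Fintype κ), ∀ v : ι → V, ∃ w : κ → V, ∀ x,
      x ∈ PointedCone.hull ℝ (Set.range w) ↔
        x ∈ PointedCone.hull ℝ (Set.range v) ∧ ∀ f ∈ L, 0 ≤ f x := by
  induction L with
  | nil => exact ⟨ι, inferInstance, fun v => ⟨v, by simp⟩⟩
  | cons f L ih =>
    obtain ⟨κ, _, hκ⟩ := ih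
    refine ⟨κ ⊕ κ × κ, inferInstance, fun v => ?_⟩
    obtain ⟨w, hw⟩ := hκ v
    obtain ⟨w', hw'⟩ := fourier_motzkin_step f w
    refine ⟨w', fun x => ?_⟩
    rw [hw', hw, List.forall_mem_cons]
    tauto

/-! ### Well-conditioned generators -/

/-- Every cone in `V` with generators indexed by `ι` is generated by `N` vectors of bounded norm
such that each point of the cone has a representation with coefficients controlled by its norm;
`N` and both bounds depend on `V` and `ι` only. The generators of the pieces of the cone in the
coordinate orthants serve, since no cancellation can occur within an orthant. -/
theorem exists_wellConditioned_generators (V : Type*) [NormedAddCommGroup V] [NormedSpace ℝ V]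
    [FiniteDimensional ℝ V] (ι : Type) [Fintype ι] :
    ∃ (N : ℕ) (R K : ℝ), 0 ≤ K ∧ ∀ v : ι → V, ∃ w : Fin N → V,
      (∀ i, w i ∈ PointedCone.hull ℝ (Set.range v)) ∧ (∀ i, ‖w i‖ ≤ R) ∧
      ∀ x ∈ PointedCone.hull ℝ (Set.range v), ∃ c : Fin N → ℝ,
        (∀ i, 0 ≤ c i) ∧ (∀ i, c i ≤ K * ‖x‖) ∧ ∑ i, c i • w i = x := by
  classical
  let b := Module.finBasis ℝ V
  let D := Fin (Module.finrank ℝ V)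
  -- the signed coordinates cutting out the orthant of sign pattern `σ`
  let ℓ : (D → ℤˣ) → D → V →ₗ[ℝ] ℝ := fun σ k => (((σ k : ℤˣ) : ℤ) : ℝ) • b.coord k
  have key : ∀ σ : D → ℤˣ, ∃ (κ : Type) (_ : Fintype κ), ∀ v : ι → V, ∃ w : κ → V, ∀ x,
      x ∈ PointedCone.hull ℝ (Set.range w) ↔
        x ∈ PointedCone.hull ℝ (Set.range v) ∧ ∀ k, 0 ≤ ℓ σ k x := by
    intro σ
    obtain ⟨κ, i, h⟩ := exists_generators_cut (List.ofFn (ℓ σ)) ι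
    refine ⟨κ, i, fun v => ?_⟩
    obtain ⟨w, hw⟩ := h v
    exact ⟨w, fun x => by rw [hw]; simp [List.mem_ofFn, D]⟩
  choose κ iκ hκ using key
  let e := Fintype.equivFin (Σ σ, κ σ)
  -- the `ℓ¹` norm in coordinates, comparable with the norm of `V`
  let n1 : V → ℝ := fun x => ∑ k, |b.coord k x|
  obtain ⟨K, hK0, hK⟩ : ∃ K : ℝ, 0 ≤ K ∧ ∀ x, n1 x ≤ K * ‖x‖ := by
    let T : D → (V →L[ℝ] ℝ) := fun k => LinearMap.toContinuousLinearMap (b.coord k)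
    refine ⟨∑ k, ‖T k‖, Finset.sum_nonneg fun k _ => norm_nonneg _, fun x => ?_⟩
    rw [Finset.sum_mul]
    exact Finset.sum_le_sum fun k _ => (T k).le_opNorm x
  have hR : ∀ x, ‖x‖ ≤ (∑ k, ‖b k‖) * n1 x := by
    intro x
    calc ‖x‖ = ‖∑ k, b.coord k x • b k‖ := by simp [Module.Basis.coord_apply, b.sum_repr]
      _ ≤ ∑ k, ‖b.coord k x • b k‖ := norm_sum_le _ _
      _ ≤ ∑ k, ‖b k‖ * n1 x := by
        refine Finset.sum_le_sum fun k _ => ?_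
        rw [norm_smul, mul_comm]
        refine mul_le_mul_of_nonneg_left ?_ (norm_nonneg _)
        exact Finset.single_le_sum (f := fun k => |b.coord k x|) (fun _ _ => abs_nonneg _)
          (Finset.mem_univ k)
      _ = _ := by rw [Finset.sum_mul]
  -- on each orthant the `ℓ¹` norm is linear
  let lam : (D → ℤˣ) → V →ₗ[ℝ] ℝ := fun σ => ∑ k, ℓ σ k
  have hlin : ∀ σ x, (∀ k, 0 ≤ ℓ σ k x) → n1 x = lam σ x := by
    intro σ x hx
    simp only [n1, lam, LinearMap.sum_apply]
    refine Finset.sum_congr rfl fun k _ => ?_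
    have h := hx k
    simp only [ℓ, LinearMap.smul_apply, smul_eq_mul] at h ⊢
    rcases Int.units_eq_one_or (σ k) with hs | hs <;> simp only [hs] at h ⊢ <;>
      push_cast at h ⊢
    · rw [one_mul] at h ⊢; exact abs_of_nonneg h
    · rw [abs_of_nonpos (by linarith)]; ring
  refine ⟨Fintype.card (Σ σ, κ σ), ∑ k, ‖b k‖, K, hK0, fun v => ?_⟩
  choose w hw using fun σ => hκ σ v
  have hwm : ∀ σ i, w σ i ∈ PointedCone.hull ℝ (Set.range v) ∧ ∀ k, 0 ≤ ℓ σ k (w σ i) :=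
    fun σ i => (hw σ _).1 (PointedCone.subset_hull ⟨i, rfl⟩)
  have hn1 : ∀ x, 0 ≤ n1 x := fun x => Finset.sum_nonneg fun _ _ => abs_nonneg _
  -- normalizing a zero generator by `0⁻¹ = 0` leaves it equal to zero
  refine ⟨fun i => (n1 (w _ (e.symm i).2))⁻¹ • w _ (e.symm i).2,
    fun i => PointedCone.smul_mem _ (inv_nonneg.2 (hn1 _)) (hwm _ _).1, fun i => ?_, ?_⟩
  · rw [norm_smul, norm_inv, Real.norm_of_nonneg (hn1 _)]
    refine (mul_le_mul_of_nonneg_left (hR _) (inv_nonneg.2 (hn1 _))).trans ?_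
    rw [mul_left_comm]
    exact mul_le_of_le_one_right (Finset.sum_nonneg fun _ _ => norm_nonneg _)
      inv_mul_le_one
  · intro x hx
    obtain ⟨σ, hσ⟩ : ∃ σ : D → ℤˣ, ∀ k, 0 ≤ ℓ σ k x := by
      refine ⟨fun k => if 0 ≤ b.coord k x then 1 else -1, fun k => ?_⟩
      simp only [ℓ, LinearMap.smul_apply, smul_eq_mul]
      split_ifs with h
      · simpa using h
      · push_cast; linarith
    obtain ⟨c, hc, hcx⟩ := mem_hull_range.1 ((hw σ x).2 ⟨hx, hσ⟩)
    have hsum : ∑ i, c i * n1 (w σ i) = n1 x := by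
      rw [hlin σ x hσ, ← hcx, map_sum]
      refine Finset.sum_congr rfl fun i _ => ?_
      rw [map_smul, smul_eq_mul, hlin σ _ (hwm σ i).2]
    -- only the generators from the orthant of `x` are used
    let C : (Σ σ, κ σ) → ℝ := fun p => if p.1 = σ then
      n1 (w p.1 p.2) * (if h : p.1 = σ then c (h ▸ p.2) else 0) else 0
    have hC0 : ∀ p, 0 ≤ C p := by
      intro p
      simp only [C]
      split_ifs
      exacts [mul_nonneg (hn1 _) (hc _), le_rfl]
    have hCle : ∀ p, C p ≤ K * ‖x‖ := by
      rintro ⟨τ, i⟩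
      by_cases h : τ = σ
      · subst h
        simp only [C, if_true, dif_pos]
        refine le_trans ?_ (hK x)
        rw [← hsum, mul_comm]
        exact Finset.single_le_sum (f := fun i => c i * n1 (w τ i))
          (fun i _ => mul_nonneg (hc i) (hn1 _)) (Finset.mem_univ i)
      · simp only [C, h, if_false]
        exact mul_nonneg hK0 (norm_nonneg _)
    refine ⟨fun i => C (e.symm i), fun i => hC0 _, fun i => hCle _, ?_⟩
    rw [e.symm.sum_comp (fun p => C p • (n1 (w p.1 p.2))⁻¹ • w p.1 p.2), Fintype.sum_sigma,
      Finset.sum_eq_single σ, ← hcx]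
    · refine Finset.sum_congr rfl fun i _ => ?_
      simp only [C, if_true, dif_pos, smul_smul]
      by_cases h : n1 (w σ i) = 0
      · have : w σ i = 0 := by
          have := hR (w σ i)
          rw [h, mul_zero] at this
          exact norm_le_zero_iff.1 this
        simp [this]
      · rw [mul_comm, ← mul_assoc, inv_mul_cancel₀ h, one_mul]
    · intro τ _ h
      simp [C, h]
    · simp

theorem isClosed_hull_range {ι : Type} [Fintype ι] {V : Type*} [NormedAddCommGroup V]
    [NormedSpace ℝ V] [FiniteDimensional ℝ V] (v : ι → V) :
    IsClosed (PointedCone.hull ℝ (Set.range v) : Set V) := by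
  obtain ⟨N, R, K, hK0, H⟩ := exists_wellConditioned_generators V ι
  obtain ⟨w, hw, -, hx⟩ := H v
  refine IsSeqClosed.isClosed fun x y hxm hxy => ?_
  obtain ⟨M, hM⟩ := hxy.norm.bddAbove_range
  choose c hc0 hcK hcx using fun n => hx (x n) (hxm n)
  obtain ⟨a, ha, φ, hφ, hlim⟩ := (isCompact_Icc (a := (0 : Fin N → ℝ))
    (b := fun _ => K * M)).tendsto_subseq (x := c) fun n =>
      ⟨fun i => hc0 n i, fun i => (hcK n i).trans
        (mul_le_mul_of_nonneg_left (hM ⟨n, rfl⟩) hK0)⟩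
  have h1 : Tendsto (fun n => ∑ i, c (φ n) i • w i) atTop (𝓝 (∑ i, a i • w i)) :=
    tendsto_finsetSum _ fun i _ => ((tendsto_pi_nhds.1 hlim) i).smul_const _
  have h2 := tendsto_nhds_unique h1 
    ((hxy.comp hφ.tendsto_atTop).congr fun n => (hcx (φ n)).symm)
  rw [← h2]
  exact Submodule.sum_mem _ fun i _ => PointedCone.smul_mem _ (ha.1 i) (hw i)

theorem isClosed_polyR {d m : ℕ} (A : Fin d → EuclideanSpace ℝ (Fin m)) (g : Fin d → ℝ) :
    IsClosed (polyR A g) := by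
  simp only [polyR, Set.ofPred_forall]
  exact isClosed_iInter fun j => isClosed_le (by fun_prop) continuous_const

theorem convex_polyR {d m : ℕ} (A : Fin d → EuclideanSpace ℝ (Fin m)) (g : Fin d → ℝ) :
    Convex ℝ (polyR A g) := by
  simp only [polyR, Set.ofPred_forall]
  exact convex_iInter fun j => convex_halfSpace_le (innerₗ _ (A j)).isLinear _

/-! ### Projection onto a polyhedron and the limit system -/

/-- The KKT conditions for the projection `y` of `x` onto a polyhedron containing the origin. -/
theorem exists_projection_kkt {d m : ℕ} (A : Fin d → EuclideanSpace ℝ (Fin m)) (g : Fin d → ℝ)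
    (hg : ∀ j, 0 ≤ g j) (x : EuclideanSpace ℝ (Fin m)) :
    ∃ y ∈ polyR A g, ‖y‖ ≤ ‖x‖ ∧ ∃ c : Fin d → ℝ, (∀ j, 0 ≤ c j) ∧
      ∑ j, c j • A j = x - y ∧ ∑ j, c j * g j = ⟪x - y, y⟫ := by
  classical
  have h0 : (0 : EuclideanSpace ℝ (Fin m)) ∈ polyR A g := fun j => by simpa using hg j
  obtain ⟨y, hy, hyx⟩ := exists_norm_eq_iInf_of_complete_convex ⟨0, h0⟩
    (isClosed_polyR A g).isComplete (convex_polyR A g) x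
  rw [norm_eq_iInf_iff_real_inner_le_zero (convex_polyR A g) hy] at hyx
  refine ⟨y, hy, ?_, ?_⟩
  · have h1 := hyx 0 h0
    rw [zero_sub, inner_neg_right, inner_sub_left, real_inner_self_eq_norm_sq] at h1
    have h2 := real_inner_le_norm x y
    by_contra! h3
    nlinarith [norm_nonneg x]
  · let v : Fin d → EuclideanSpace ℝ (Fin m) := fun j => if ⟪A j, y⟫ = g j then A j else 0
    have hmem : x - y ∈ PointedCone.hull ℝ (Set.range v) := by
      by_contra hne
      let C : ProperCone ℝ (EuclideanSpace ℝ (Fin m)) :=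
        ⟨PointedCone.hull ℝ (Set.range v), isClosed_hull_range v⟩
      obtain ⟨z, hz, hzx⟩ := C.hyperplane_separation' (x₀ := x - y) hne
      -- moving from `y` in the direction `-z` stays feasible for a short time
      have hev : ∀ᶠ t : ℝ in 𝓝[>] 0, ∀ j, ⟪A j, y - t • z⟫ ≤ g j := by
        rw [eventually_all]
        intro j
        by_cases hj : ⟪A j, y⟫ = g j
        · filter_upwards [self_mem_nhdsWithin] with t ht
          have := hz (A j) (PointedCone.subset_hull ⟨j, by simp [v, hj]⟩)
          rw [inner_sub_right, inner_smul_right, hj]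
          nlinarith [mul_nonneg (le_of_lt (Set.mem_Ioi.1 ht)) this]
        · have hlt : ⟪A j, y⟫ < g j := lt_of_le_of_ne (hy j) hj
          have hc : Continuous fun t : ℝ => ⟪A j, y - t • z⟫ := by fun_prop
          have := (hc.tendsto 0).eventually_le_const (u := g j) (by simpa using hlt)
          exact nhdsWithin_le_nhds this
      obtain ⟨t, ht, ht0⟩ := (hev.and self_mem_nhdsWithin).exists
      have h1 := hyx _ ht
      rw [sub_sub_cancel_left, inner_neg_right, inner_smul_right] at h1
      have : t * ⟪x - y, z⟫ < 0 := mul_neg_of_pos_of_neg ht0 hzx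
      linarith
    obtain ⟨c, hc, hcx⟩ := mem_hull_range.1 hmem
    have hcx' : ∑ j, (if ⟪A j, y⟫ = g j then c j else 0) • A j = x - y := by
      rw [← hcx]
      refine Finset.sum_congr rfl fun j _ => ?_
      simp only [v]
      split_ifs <;> simp
    refine ⟨fun j => if ⟪A j, y⟫ = g j then c j else 0, fun j => ?_, hcx', ?_⟩
    · dsimp only
      split_ifs
      exacts [hc j, le_rfl]
    · rw [← hcx', sum_inner]
      refine Finset.sum_congr rfl fun j _ => ?_
      rw [real_inner_smul_left]
      dsimp only
      split_ifs with h
      · rw [h]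
      · simp

/-- Limits of feasible points are feasible for the limit system. -/
theorem mem_polyE_of_tendsto {d m : ℕ} {A : ℕ → Fin d → EuclideanSpace ℝ (Fin m)}
    {g : ℕ → Fin d → ℝ} {A₀ : Fin d → EuclideanSpace ℝ (Fin m)} {g₀ : Fin d → ℝ≥0∞}
    (hg : ∀ n j, 0 ≤ g n j) (hA : Tendsto A atTop (𝓝 A₀))
    (hg₀ : ∀ j, Tendsto (fun n => ENNReal.ofReal (g n j)) atTop (𝓝 (g₀ j)))
    {x : ℕ → EuclideanSpace ℝ (Fin m)} {x₀ : EuclideanSpace ℝ (Fin m)}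
    (hx : ∀ n, x n ∈ polyR (A n) (g n)) (hx₀ : Tendsto x atTop (𝓝 x₀)) :
    x₀ ∈ polyE A₀ g₀ := by
  intro j hj
  have h1 : Tendsto (fun n => g n j) atTop (𝓝 (g₀ j).toReal) :=
    ((ENNReal.tendsto_toReal hj).comp (hg₀ j)).congr fun n => ENNReal.toReal_ofReal (hg n j)
  exact le_of_tendsto_of_tendsto' (((tendsto_pi_nhds.1 hA) j).inner hx₀) h1 fun n => hx n j

/-! ### Existence of augmenting inequalities -/

/-- (Existence of augmenting inequalities.) Let each row of `A_n` be zero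
or of unit norm and `g_n ≥ 0`. Then there are `d_B`, a subsequence `(n_q)`, matrices `B_q`
and nonnegative vectors `h_q` such that: (a) `A_{n_q} → A₀`, `B_q → B₀`, `g_{n_q} → g₀` and
`h_q → h₀` componentwise in `[0,∞]`; (b) `poly(A_{n_q},g_{n_q}) ⊆ poly(B_q,h_q)`; (c) for
all `q` and all `x ∈ poly(A_{n_q},g_{n_q})`, the rank of the active rows of `A_{n_q}` at
`x` equals the rank of the active rows of `A_{n_q}` and `B_q` at `x` taken together; and
(d) `poly([A_{n_q};B_q],[g_{n_q};h_q])` Kuratowski-converges to `poly([A₀;B₀],[g₀;h₀])`. -/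
theorem statement17 {dA m : ℕ}
    (A : ℕ → Fin dA → EuclideanSpace ℝ (Fin m))
    (hA : ∀ n j, A n j = 0 ∨ ‖A n j‖ = 1)
    (g : ℕ → Fin dA → ℝ) (hg : ∀ n j, 0 ≤ g n j) :
    ∃ (dB : ℕ) (φ : ℕ → ℕ), StrictMono φ ∧
      ∃ (B : ℕ → Fin dB → EuclideanSpace ℝ (Fin m)) (h : ℕ → Fin dB → ℝ),
        (∀ q j, 0 ≤ h q j) ∧
        ∃ (A₀ : Fin dA → EuclideanSpace ℝ (Fin m)) (B₀ : Fin dB → EuclideanSpace ℝ (Fin m))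
          (g₀ : Fin dA → ℝ≥0∞) (h₀ : Fin dB → ℝ≥0∞),
          Tendsto (fun q => A (φ q)) atTop (nhds A₀) ∧
          Tendsto B atTop (nhds B₀) ∧
          (∀ j, Tendsto (fun q => ENNReal.ofReal (g (φ q) j)) atTop (nhds (g₀ j))) ∧
          (∀ j, Tendsto (fun q => ENNReal.ofReal (h q j)) atTop (nhds (h₀ j))) ∧
          (∀ q, polyR (A (φ q)) (g (φ q)) ⊆ polyR (B q) (h q)) ∧
          (∀ q, ∀ x ∈ polyR (A (φ q)) (g (φ q)),
            Module.finrank ℝ (Submodule.span ℝ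
                (A (φ q) '' {j | ⟪A (φ q) j, x⟫ = g (φ q) j})) =
              Module.finrank ℝ (Submodule.span ℝ
                (A (φ q) '' {j | ⟪A (φ q) j, x⟫ = g (φ q) j} ∪
                  B q '' {j | ⟪B q j, x⟫ = h q j}))) ∧
          KuratowskiTendsto (fun q => polyR (A (φ q)) (g (φ q)) ∩ polyR (B q) (h q))
            (polyE A₀ g₀ ∩ polyE B₀ h₀) := by
  classical
  obtain ⟨N, R, K, hK0, H⟩ :=
    exists_wellConditioned_generators (EuclideanSpace ℝ (Fin m) × ℝ) (Fin dA)
  choose w hw hwR hwx using fun n => H fun j => (A n j, g n j)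
  -- each new row is a nonnegative combination of the given rows, right-hand sides included
  have hcomb : ∀ n i, ∃ c : Fin dA → ℝ, (∀ j, 0 ≤ c j) ∧
      (w n i).1 = ∑ j, c j • A n j ∧ (w n i).2 = ∑ j, c j * g n j := by
    intro n i
    obtain ⟨c, hc, hcw⟩ := mem_hull_range.1 (hw n i)
    refine ⟨c, hc, ?_, ?_⟩ <;> rw [← hcw]
    · simp [Prod.fst_sum]
    · simp [Prod.snd_sum]
  have hw2 : ∀ n i, 0 ≤ (w n i).2 := fun n i => by
    obtain ⟨c, hc, -, h2⟩ := hcomb n i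
    rw [h2]
    exact Finset.sum_nonneg fun j _ => mul_nonneg (hc j) (hg n j)
  have hsub : ∀ n, polyR (A n) (g n) ⊆ polyR (fun i => (w n i).1) (fun i => (w n i).2) := by
    intro n x hx i
    obtain ⟨c, hc, h1, h2⟩ := hcomb n i
    simp only [h1, h2, sum_inner, real_inner_smul_left]
    exact Finset.sum_le_sum fun j _ => mul_le_mul_of_nonneg_left (hx j) (hc j)
  obtain ⟨⟨A₀, g₀, w₀⟩, -, φ, hφ, hlim⟩ := ((isCompact_univ_pi fun _ : Fin dA =>
      isCompact_closedBall (0 : EuclideanSpace ℝ (Fin m)) 1).prod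
      ((isCompact_univ (X := Fin dA → ℝ≥0∞)).prod (isCompact_univ_pi fun _ : Fin N =>
        isCompact_closedBall (0 : EuclideanSpace ℝ (Fin m) × ℝ) R))).tendsto_subseq
    (x := fun n => (A n, (fun j => ENNReal.ofReal (g n j)), w n)) (fun n => by
      refine ⟨fun j _ => ?_, trivial, fun i _ => ?_⟩
      · rcases hA n j with h | h <;> simp [h]
      · simpa using hwR n i)
  have hAlim : Tendsto (fun q => A (φ q)) atTop (𝓝 A₀) := hlim.fst_nhds
  have hglim : ∀ j, Tendsto (fun q => ENNReal.ofReal (g (φ q) j)) atTop (𝓝 (g₀ j)) :=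
    tendsto_pi_nhds.1 hlim.snd_nhds.fst_nhds
  have hwlim : ∀ i, Tendsto (fun q => w (φ q) i) atTop (𝓝 (w₀ i)) :=
    tendsto_pi_nhds.1 hlim.snd_nhds.snd_nhds
  have hBlim : Tendsto (fun q i => (w (φ q) i).1) atTop (𝓝 fun i => (w₀ i).1) :=
    tendsto_pi_nhds.2 fun i => (hwlim i).fst_nhds
  have hhlim : ∀ i, Tendsto (fun q => ENNReal.ofReal (w (φ q) i).2) atTop
      (𝓝 (ENNReal.ofReal (w₀ i).2)) :=
    fun i => ENNReal.tendsto_ofReal (hwlim i).snd_nhds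
  refine ⟨N, φ, hφ, fun q i => (w (φ q) i).1, fun q i => (w (φ q) i).2, fun q i => hw2 _ _,
    A₀, fun i => (w₀ i).1, g₀, fun i => ENNReal.ofReal (w₀ i).2, hAlim, hBlim, hglim, hhlim,
    fun q => hsub _, fun q x hx => ?_, ?_, ?_⟩
  · rw [Submodule.span_union, sup_eq_left.2]
    rw [Submodule.span_le]
    rintro _ ⟨i, hi, rfl⟩
    obtain ⟨c, hc, h1, h2⟩ := hcomb (φ q) i
    simp only [Set.mem_ofPred_eq, h1, h2, sum_inner, real_inner_smul_left] at hi
    -- complementary slackness: only active rows carry weight in an active combination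
    have hz := (Finset.sum_eq_sum_iff_of_le fun j _ =>
      mul_le_mul_of_nonneg_left (hx j) (hc j)).1 hi
    simp only [h1]
    refine Submodule.sum_mem _ fun j _ => ?_
    rcases (hc j).eq_or_lt with h | h
    · rw [← h, zero_smul]; exact zero_mem _
    · exact Submodule.smul_mem _ _ (Submodule.subset_span
        ⟨j, mul_left_cancel₀ h.ne' (hz j (Finset.mem_univ j)), rfl⟩)
  · rintro x ⟨-, hxB⟩
    choose y hy hyx c hc hcA hcg using fun q =>
      exists_projection_kkt (A (φ q)) (g (φ q)) (hg (φ q)) x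
    refine ⟨y, fun q => ⟨hy q, hsub _ (hy q)⟩, ?_⟩
    have hmem : ∀ q, ((x - y q, ⟪x - y q, y q⟫) : EuclideanSpace ℝ (Fin m) × ℝ) ∈
        PointedCone.hull ℝ (Set.range fun j => (A (φ q) j, g (φ q) j)) := by
      intro q
      refine mem_hull_range.2 ⟨c q, hc q, ?_⟩
      ext1
      · simpa [Prod.fst_sum] using hcA q
      · simpa [Prod.snd_sum] using hcg q
    choose μ hμ0 hμK hμ using fun q => hwx (φ q) _ (hmem q)
    set M := max (2 * ‖x‖) (2 * ‖x‖ * ‖x‖) with hM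
    have hM0 : 0 ≤ M := le_max_of_le_left (by positivity)
    have hbd : ∀ q, ‖((x - y q, ⟪x - y q, y q⟫) : EuclideanSpace ℝ (Fin m) × ℝ)‖ ≤ M := by
      intro q
      have h1 : ‖x - y q‖ ≤ 2 * ‖x‖ := (norm_sub_le _ _).trans (by linarith [hyx q])
      refine max_le_max h1 ((norm_inner_le_norm _ _).trans ?_)
      exact mul_le_mul h1 (hyx q) (norm_nonneg _) (by positivity)
    -- the squared distance is a bounded combination of the violations of the new constraints
    have hsq : ∀ q, ‖y q - x‖ ^ 2 ≤
        ∑ i, K * M * max (⟪(w (φ q) i).1, x⟫ - (w (φ q) i).2) 0 := by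
      intro q
      have h1 : ∑ i, μ q i • (w (φ q) i).1 = x - y q := by
        simpa [Prod.fst_sum] using congrArg Prod.fst (hμ q)
      have h2 : ∑ i, μ q i * (w (φ q) i).2 = ⟪x - y q, y q⟫ := by
        simpa [Prod.snd_sum] using congrArg Prod.snd (hμ q)
      have h3 : ‖y q - x‖ ^ 2 = ⟪x - y q, x⟫ - ⟪x - y q, y q⟫ := by
        rw [← inner_sub_right, real_inner_self_eq_norm_sq, norm_sub_rev]
      rw [h3, ← h2, ← h1, sum_inner, ← Finset.sum_sub_distrib]
      refine Finset.sum_le_sum fun i _ => ?_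
      rw [real_inner_smul_left, ← mul_sub]
      refine (mul_le_mul_of_nonneg_left (le_max_left _ 0) (hμ0 q i)).trans ?_
      exact mul_le_mul_of_nonneg_right
        ((hμK q i).trans (mul_le_mul_of_nonneg_left (hbd q) hK0)) (le_max_right _ _)
    have hlim0 : Tendsto (fun q => ∑ i, K * M * max (⟪(w (φ q) i).1, x⟫ - (w (φ q) i).2) 0)
        atTop (𝓝 0) := by
      have hsum0 : ∑ i : Fin N, K * M * max (⟪(w₀ i).1, x⟫ - (w₀ i).2) 0 = 0 := by
        refine Finset.sum_eq_zero fun i _ => ?_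
        have hw0 : 0 ≤ (w₀ i).2 := ge_of_tendsto' (hwlim i).snd_nhds fun q => hw2 _ i
        have := hxB i ENNReal.ofReal_ne_top
        rw [ENNReal.toReal_ofReal hw0] at this
        rw [max_eq_right (by linarith), mul_zero]
      have ht : Tendsto (fun q => ∑ i, K * M * max (⟪(w (φ q) i).1, x⟫ - (w (φ q) i).2) 0)
          atTop (𝓝 (∑ i, K * M * max (⟪(w₀ i).1, x⟫ - (w₀ i).2) 0)) :=
        tendsto_finsetSum _ fun i _ => ((((hwlim i).fst_nhds.inner
          tendsto_const_nhds).sub (hwlim i).snd_nhds).max tendsto_const_nhds).const_mul _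
      rwa [hsum0] at ht
    rw [tendsto_iff_norm_sub_tendsto_zero]
    have hs := squeeze_zero (fun q => sq_nonneg ‖y q - x‖) hsq hlim0
    simpa [Real.sqrt_sq] using hs.sqrt
  · intro ψ hψ x x₀ hx hx₀
    exact ⟨mem_polyE_of_tendsto (fun n => hg _) (hAlim.comp hψ.tendsto_atTop)
        (fun j => (hglim j).comp hψ.tendsto_atTop) (fun q => (hx q).1) hx₀,
      mem_polyE_of_tendsto (fun n => hw2 _) (hBlim.comp hψ.tendsto_atTop)
        (fun j => (hhlim j).comp hψ.tendsto_atTop) (fun q => (hx q).2) hx₀⟩
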